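/- Let m ≥ n ≥ 3. If f_1,…,f_m : [n] → [n] are such that (f_1(x_1),…,f_m(x_m)) ∈ Surj_{m,n} for every (x_1,…,x_m) ∈ Surj_{m,n} (that is, f_1,…,f_m constitute an arity-1 polymorphism of Surj_{m,n}), then one of the following holds: (i) there exists a permutation π of [n] such that f_1 = ⋯ = f_m = π; or (ii) for each j ∈ [n] there exists i ∈ [m] such that f_i is the constant j function. -/

import Mathlib

/-!
View `f` as a table with rows `ι`, columns `α` and entry `f i s` in the cell `(i, s)`. Suppose first
that the table is square, of size `n`. A transversal of the table avoiding the colour `j` would be a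
surjective vector whose image misses `j`, so by the Frobenius–König theorem the cells of colour `j`
contain a rectangle whose sides add up to more than `n`, hence at least `n` cells. There are `n`
colours and `n ^ 2` cells, so each colour occupies exactly `n` cells, which forces its rectangle to
be a full row or a full column. As rows meet columns, all colours are rows (the constant
coordinates) or all are columns (a common permutation).

A larger family reduces to a square one by restricting it to `n` coordinates that realise
every constant realised in the family: a colour `j` that is not realised can be avoided outside
the restriction, so it must appear inside.
-/

section Surj

open Finset Function

variable {ι κ α : Type*}

/-- The unary polymorphisms of the predicate `Surj`, for an arbitrary type `ι` of objects and `α` of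
categories: families `f` of maps, one for each object, that carry surjective vectors to surjective
vectors. -/
def IsSurjPolymorphism (f : ι → α → α) : Prop :=
  ∀ x : ι → α, Surjective x → Surjective fun i => f i (x i)

/-- Certificates: families in which every category is the value of a constant coordinate. They are
the polymorphisms whose constant coordinates alone force every image vector to be surjective. -/
def IsCertificate (f : ι → α → α) : Prop :=
  ∀ j, ∃ i, ∀ s, f i s = j

/-- The nontrivial direction of the Frobenius–König theorem. -/
theorem exists_card_lt_card_add_card_of_forall_equiv [Fintype ι] [Fintype α]
    (hcard : Fintype.card ι = Fintype.card α) {r : ι → α → Prop}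
    (h : ∀ e : α ≃ ι, ∃ s, r (e s) s) :
    ∃ (A : Finset ι) (S : Finset α), Fintype.card α < #A + #S ∧ ∀ i ∈ A, ∀ s ∈ S, r i s := by
  classical
  by_contra! hsmall
  let t (s : α) : Finset ι := {i | ¬ r i s}
  have hall (S : Finset α) : #S ≤ #(S.biUnion t) := by
    by_contra! hlt
    obtain ⟨i, hi, s, hs, hr⟩ := hsmall (S.biUnion t)ᶜ S (by
      have := card_compl_add_card (S.biUnion t)
      omega)
    exact mem_compl.1 hi (mem_biUnion.2 ⟨s, hs, by simpa [t] using hr⟩)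
  obtain ⟨g, hg, hgt⟩ := (all_card_le_biUnion_card_iff_exists_injective t).1 hall
  have hbij : Bijective g :=
    (Fintype.bijective_iff_injective_and_card g).2 ⟨hg, hcard.symm⟩
  obtain ⟨s, hs⟩ := h (Equiv.ofBijective g hbij)
  exact (mem_filter.1 (hgt s)).2 hs

theorem card_filter_eq_of_forall_le [Fintype κ] [Fintype α] [DecidableEq α] {c : κ → α} {k : ℕ}
    (hk : Fintype.card κ = Fintype.card α * k) (h : ∀ j, k ≤ #{p | c p = j}) (j : α) :
    #{p | c p = j} = k := by
  have hsum : ∑ _j : α, k = ∑ j, #{p | c p = j} := by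
    rw [← card_eq_sum_card_fiberwise (fun _ _ => mem_coe.2 (mem_univ _))]
    simp [hk]
  exact ((sum_eq_sum_iff_of_le fun j _ => h j).1 hsum j (mem_univ j)).symm

theorem card_mul_card_le_card_cells [Fintype ι] [Fintype α] [DecidableEq κ] {f : ι → α → κ}
    {A : Finset ι} {S : Finset α} {j : κ} (h : ∀ i ∈ A, ∀ s ∈ S, f i s = j) :
    #A * #S ≤ #{p : ι × α | f p.1 p.2 = j} := by
  rw [← card_product]
  exact card_le_card fun p hp =>
    mem_filter.2 ⟨mem_univ p, h _ (mem_product.1 hp).1 _ (mem_product.1 hp).2⟩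

theorem exists_perm_of_forall_exists_column [Finite α] {f : ι → α → α}
    (h : ∀ j, ∃ s, ∀ i, f i s = j) : ∃ π : Equiv.Perm α, ∀ i, f i = π := by
  choose g hg using h
  obtain _ | ⟨⟨i₀⟩⟩ := isEmpty_or_nonempty ι
  · exact ⟨1, isEmptyElim⟩
  have hleft (i : ι) : LeftInverse (f i) g := fun j => hg j i
  have hbij : Bijective g := Finite.injective_iff_bijective.1 (hleft i₀).injective
  exact ⟨(Equiv.ofBijective g hbij).symm, fun i =>
    (hleft i).eq_rightInverse (Equiv.ofBijective g hbij).right_inv⟩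

theorem exists_finset_forall_constant [Fintype α] (f : ι → α → α) :
    ∃ R : Finset ι, #R ≤ Fintype.card α ∧
      ∀ i j, (∀ s, f i s = j) → ∃ i' ∈ R, ∀ s, f i' s = j := by
  classical
  choose r hr using fun j : {j // ∃ i, ∀ s, f i s = j} => j.2
  exact ⟨univ.image r, card_image_le.trans (Fintype.card_subtype_le _), fun i j hij =>
    ⟨_, mem_image_of_mem r (mem_univ ⟨j, i, hij⟩), hr _⟩⟩

theorem exists_superset_card_eq_of_embedding [Fintype α] (e : α ↪ ι) {R : Finset ι}
    (hR : #R ≤ Fintype.card α) : ∃ J, R ⊆ J ∧ #J = Fintype.card α := by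
  classical
  obtain ⟨J, hRJ, -, hJ⟩ := exists_subsuperset_card_eq
    (subset_union_left (s₂ := univ.map e)) hR
    ((card_map e).symm.trans_le (card_le_card subset_union_right))
  exact ⟨J, hRJ, hJ⟩

namespace IsSurjPolymorphism

variable {f : ι → α → α}

theorem comp_injective (hf : IsSurjPolymorphism f) {k : κ → ι} (hk : Injective k)
    (hconst : ∀ i j, (∀ s, f i s = j) → ∃ a, ∀ s, f (k a) s = j) :
    IsSurjPolymorphism (f ∘ k) := by
  intro y hy j
  by_cases hj : ∃ i, ∀ s, f i s = j
  · obtain ⟨i, hi⟩ := hj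
    obtain ⟨a, ha⟩ := hconst i j hi
    exact ⟨a, ha (y a)⟩
  push Not at hj
  choose w hw using hj
  have hy_extend (a : κ) : extend k y w (k a) = y a := hk.extend_apply y w a
  have hsurj : Surjective (extend k y w) := fun s =>
    (hy s).imp' k fun a ha => (hy_extend a).trans ha
  obtain ⟨i, hi⟩ := hf _ hsurj j
  by_cases hik : ∃ a, k a = i
  · obtain ⟨a, rfl⟩ := hik
    exact ⟨a, by simpa only [comp_apply, hy_extend] using hi⟩
  · exact absurd (by simpa only [extend_apply' y w i hik] using hi) (hw i)

section Square

variable [Fintype ι] [Fintype α]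

theorem exists_rectangle (hf : IsSurjPolymorphism f) (hcard : Fintype.card ι = Fintype.card α)
    (j : α) : ∃ (A : Finset ι) (S : Finset α),
      Fintype.card α < #A + #S ∧ ∀ i ∈ A, ∀ s ∈ S, f i s = j := by
  refine exists_card_lt_card_add_card_of_forall_equiv hcard fun e => ?_
  obtain ⟨i, hi⟩ := hf e.symm e.symm.surjective j
  exact ⟨e.symm i, by simpa using hi⟩

theorem card_le_card_cells [DecidableEq α] (hf : IsSurjPolymorphism f)
    (hcard : Fintype.card ι = Fintype.card α) (j : α) :
    Fintype.card α ≤ #{p : ι × α | f p.1 p.2 = j} := by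
  obtain ⟨A, S, hAS, hj⟩ := hf.exists_rectangle hcard j
  have hA : #A ≤ Fintype.card α := hcard ▸ A.card_le_univ
  have hS : #S ≤ Fintype.card α := S.card_le_univ
  calc
    Fintype.card α ≤ #A + #S - 1 := by omega
    _ ≤ #A * #S := Nat.add_sub_one_le_mul (by omega) (by omega)
    _ ≤ #{p : ι × α | f p.1 p.2 = j} := card_mul_card_le_card_cells hj

theorem exists_row_or_exists_column (hf : IsSurjPolymorphism f)
    (hcard : Fintype.card ι = Fintype.card α) (j : α) :
    (∃ i, ∀ s, f i s = j) ∨ ∃ s, ∀ i, f i s = j := by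
  classical
  obtain ⟨A, S, hAS, hj⟩ := hf.exists_rectangle hcard j
  have hA : #A ≤ Fintype.card α := hcard ▸ A.card_le_univ
  have hS : #S ≤ Fintype.card α := S.card_le_univ
  have hcells : #{p : ι × α | f p.1 p.2 = j} = Fintype.card α :=
    card_filter_eq_of_forall_le (by rw [Fintype.card_prod, hcard]) (hf.card_le_card_cells hcard) j
  have harea : #A * #S ≤ Fintype.card α := (card_mul_card_le_card_cells hj).trans_eq hcells
  have hside : #A = 1 ∨ #S = 1 := by
    by_contra! h
    have : #A + #S ≤ #A * #S := Nat.add_le_mul (by omega) (by omega)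
    omega
  rcases hside with h | h
  · obtain ⟨i, hi⟩ := card_pos.1 (h ▸ one_pos)
    have hS_univ : S = univ := S.card_eq_iff_eq_univ.1 (by omega)
    exact Or.inl ⟨i, fun s => hj i hi s (hS_univ ▸ mem_univ s)⟩
  · obtain ⟨s, hs⟩ := card_pos.1 (h ▸ one_pos)
    have hA_univ : A = univ := A.card_eq_iff_eq_univ.1 (by omega)
    exact Or.inr ⟨s, fun i => hj i (hA_univ ▸ mem_univ i) s hs⟩

theorem exists_perm_of_card_eq (hf : IsSurjPolymorphism f)
    (hcard : Fintype.card ι = Fintype.card α) (hcert : ¬ IsCertificate f) :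
    ∃ π : Equiv.Perm α, ∀ i, f i = π := by
  obtain ⟨j₀, hj₀⟩ := not_forall.1 hcert
  obtain ⟨s₀, hs₀⟩ := (hf.exists_row_or_exists_column hcard j₀).resolve_left hj₀
  refine exists_perm_of_forall_exists_column fun j =>
    (hf.exists_row_or_exists_column hcard j).resolve_left ?_
  rintro ⟨i, hi⟩
  have hjj₀ : j = j₀ := (hi s₀).symm.trans (hs₀ i)
  exact hj₀ ⟨i, hjj₀ ▸ hi⟩

end Square

theorem exists_perm_on_finset [Fintype α] (hf : IsSurjPolymorphism f) (hcert : ¬ IsCertificate f)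
    {J : Finset ι} (hcard : #J = Fintype.card α)
    (hJ : ∀ i j, (∀ s, f i s = j) → ∃ i' ∈ J, ∀ s, f i' s = j) :
    ∃ π : Equiv.Perm α, ∀ i ∈ J, f i = π := by
  have hrestrict : IsSurjPolymorphism (f ∘ ((↑) : J → ι)) :=
    hf.comp_injective Subtype.val_injective fun i j hij =>
      let ⟨i', hi', hconst⟩ := hJ i j hij
      ⟨⟨i', hi'⟩, hconst⟩
  obtain ⟨π, hπ⟩ := hrestrict.exists_perm_of_card_eq (by rw [Fintype.card_coe, hcard])
    fun h => hcert fun j => (h j).imp' Subtype.val fun _ => id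
  exact ⟨π, fun i hi => hπ ⟨i, hi⟩⟩

theorem not_constant [Finite α] [Nontrivial α] (hf : IsSurjPolymorphism f)
    (hcert : ¬ IsCertificate f) (e : α ↪ ι) (i : ι) (j : α) : ¬ ∀ s, f i s = j := by
  have := Fintype.ofFinite α
  intro hij
  obtain ⟨R, hR, hconst⟩ := exists_finset_forall_constant f
  obtain ⟨J, hRJ, hJ⟩ := exists_superset_card_eq_of_embedding e hR
  obtain ⟨π, hπ⟩ := hf.exists_perm_on_finset hcert hJ fun i₁ j₁ h₁ =>
    (hconst i₁ j₁ h₁).imp fun _ h => h.imp_left (@hRJ _)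
  obtain ⟨i', hi', hi'j⟩ := hconst i j hij
  obtain ⟨s, t, hst⟩ := exists_pair_ne α
  have hf_inj : Injective (f i') := hπ i' (hRJ hi') ▸ π.injective
  exact hst (hf_inj ((hi'j s).trans (hi'j t).symm))

theorem exists_perm_pair [Finite α] [Nontrivial α] (hf : IsSurjPolymorphism f)
    (hcert : ¬ IsCertificate f) (e : α ↪ ι) (i i' : ι) :
    ∃ π : Equiv.Perm α, f i = π ∧ f i' = π := by
  classical
  have := Fintype.ofFinite α
  obtain ⟨J, hsub, hJ⟩ := exists_superset_card_eq_of_embedding e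
    (card_le_two.trans Fintype.one_lt_card : #{i, i'} ≤ Fintype.card α)
  obtain ⟨π, hπ⟩ := hf.exists_perm_on_finset hcert hJ fun i₁ j₁ h₁ =>
    absurd h₁ (hf.not_constant hcert e i₁ j₁)
  exact ⟨π, hπ i (hsub (by simp)), hπ i' (hsub (by simp))⟩

end IsSurjPolymorphism

theorem stmt2_general [Finite α] (e : α ↪ ι) {f : ι → α → α} (hf : IsSurjPolymorphism f) :
    (∃ π : Equiv.Perm α, ∀ i, f i = π) ∨ ∀ j, ∃ i, ∀ s, f i s = j := by
  refine or_iff_not_imp_right.2 fun hcert => ?_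
  have ⟨j, hj⟩ := not_forall.1 hcert
  have ⟨s, hs⟩ := not_forall.1 (not_exists.1 hj (e j))
  have : Nontrivial α := ⟨_, _, hs⟩
  obtain ⟨π, hπ, -⟩ := hf.exists_perm_pair hcert e (e j) (e j)
  refine ⟨π, fun i => ?_⟩
  obtain ⟨σ, hi, hσ⟩ := hf.exists_perm_pair hcert e i (e j)
  exact hi.trans (hσ.symm.trans hπ)

end Surj

/-- every arity-1 polymorphism of `Surj_{m,n}` (for `m ≥ n ≥ 3`) is
either a common permutation, or a certificate. -/
theorem stmt2 (m n : ℕ) (hn : 3 ≤ n) (hnm : n ≤ m)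
    (f : Fin m → Fin n → Fin n)
    (hpoly : ∀ x : Fin m → Fin n, Function.Surjective x →
      Function.Surjective (fun i => f i (x i))) :
    (∃ π : Equiv.Perm (Fin n), ∀ i : Fin m, f i = ⇑π) ∨
    (∀ j : Fin n, ∃ i : Fin m, ∀ s : Fin n, f i s = j) :=
  stmt2_general (Fin.castLEEmb hnm) hpoly
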